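/- arXiv:2202.06292 — 4 statements merged into one kernel-verified Lean document; each statement's English description precedes it below -/
import Mathlib

section
/- Let u, v ∈ ℝ^n with u, v ≥ 0 entrywise and let α ≥ 0. If Top_k(u) ≤ α·Top_k(v) for every k ∈ {1,…,n}, then ψ(u) ≤ α·ψ(v) for every symmetric monotone norm ψ : ℝ^n → ℝ. -/
/-- The top-`k` norm: the sum of the `k` largest values among `|u 1|, …, |u n|`,
expressed as the supremum over all size-`k` subsets of the sum of absolute values. -/
noncomputable def topk {n : ℕ} (k : ℕ) (u : Fin n → ℝ) : ℝ :=
  sSup {t : ℝ | ∃ S : Finset (Fin n), S.card = k ∧ t = ∑ j ∈ S, |u j|}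

lemma aux_le_emb {k n : ℕ} (f : Fin k → Fin n) (hf : StrictMono f) :
    ∀ (m : ℕ) (h : m < k), m ≤ (f ⟨m, h⟩ : ℕ) := by
  intro m
  induction m with
  | zero => intro h; exact Nat.zero_le _
  | succ m ih =>
    intro h
    have h1 := ih (by omega)
    have h2 : f ⟨m, by omega⟩ < f ⟨m + 1, h⟩ := hf (by simp [Fin.lt_def])
    have h3 : (f ⟨m, by omega⟩ : ℕ) < f ⟨m + 1, h⟩ := h2
    omega

lemma aux_sum_le_prefix {n k : ℕ} (hk : k ≤ n) (w : Fin n → ℝ) (hw : Antitone w)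
    (S : Finset (Fin n)) (hS : S.card = k) :
    ∑ j ∈ S, w j ≤ ∑ i : Fin k, w (Fin.castLE hk i) := by
  have h1 : ∑ j ∈ S, w j = ∑ i : Fin k, w (S.orderEmbOfFin hS i) := by
    conv_lhs => rw [← Finset.map_orderEmbOfFin_univ S hS]
    rw [Finset.sum_map]
    rfl
  rw [h1]
  apply Finset.sum_le_sum
  intro i _
  apply hw
  rw [Fin.le_def]
  exact aux_le_emb _ (S.orderEmbOfFin hS).strictMono i.1 i.2

lemma aux_bdd {n : ℕ} (k : ℕ) (u : Fin n → ℝ) :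
    BddAbove {t : ℝ | ∃ S : Finset (Fin n), S.card = k ∧ t = ∑ j ∈ S, |u j|} := by
  refine ⟨∑ j, |u j|, ?_⟩
  rintro t ⟨S, -, rfl⟩
  exact Finset.sum_le_sum_of_subset_of_nonneg (Finset.subset_univ _)
    (fun _ _ _ => abs_nonneg _)

lemma aux_le_topk {n k : ℕ} (hk : k ≤ n) (u : Fin n → ℝ) (hu : ∀ j, 0 ≤ u j)
    (σ : Equiv.Perm (Fin n)) :
    ∑ i : Fin k, u (σ (Fin.castLE hk i)) ≤ topk k u := by
  apply le_csSup (aux_bdd k u)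
  refine ⟨Finset.univ.map ((Fin.castLEEmb hk).trans σ.toEmbedding), by simp, ?_⟩
  rw [Finset.sum_map]
  apply Finset.sum_congr rfl
  intro i _
  simp [abs_of_nonneg (hu _)]

lemma aux_topk_le {n k : ℕ} (hk : k ≤ n) (v : Fin n → ℝ) (hv : ∀ j, 0 ≤ v j)
    (τ : Equiv.Perm (Fin n)) (hτ : Antitone (v ∘ τ)) :
    topk k v ≤ ∑ i : Fin k, v (τ (Fin.castLE hk i)) := by
  apply csSup_le
  · obtain ⟨S, -, hS⟩ := Finset.exists_subset_card_eq
      (s := (Finset.univ : Finset (Fin n))) (n := k) (by simpa using hk)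
    exact ⟨_, S, hS, rfl⟩
  · rintro t ⟨S, hS, rfl⟩
    have := aux_sum_le_prefix hk (v ∘ τ) hτ (S.map τ.symm.toEmbedding) (by simpa using hS)
    simpa [Finset.sum_map, abs_of_nonneg (hv _)] using this

lemma aux_abel (c d : ℕ → ℝ) (hc : Antitone c) (n : ℕ)
    (hd : ∀ k, 1 ≤ k → k ≤ n → 0 ≤ ∑ i ∈ Finset.range k, d i) :
    ∀ m, m < n → c m * ∑ i ∈ Finset.range (m + 1), d i ≤
      ∑ i ∈ Finset.range (m + 1), c i * d i := by
  intro m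
  induction m with
  | zero => intro h; simp
  | succ m ih =>
    intro h
    have h1 := ih (by omega)
    rw [Finset.sum_range_succ, Finset.sum_range_succ (fun i => c i * d i)]
    have h2 := mul_le_mul_of_nonneg_right (hc (Nat.le_succ m)) (hd (m + 1) (by omega) (by omega))
    simp only [Nat.succ_eq_add_one] at h2
    linarith

lemma aux_abel_fin {n : ℕ} (c d : Fin n → ℝ) (hc : Antitone c) (hc0 : ∀ i, 0 ≤ c i)
    (hd : ∀ k (hk : k ≤ n), 1 ≤ k → 0 ≤ ∑ i : Fin k, d (Fin.castLE hk i)) :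
    0 ≤ ∑ i, c i * d i := by
  rcases n with _ | n
  · simp
  let C : ℕ → ℝ := fun i => if h : i < n + 1 then c ⟨i, h⟩ else 0
  let D : ℕ → ℝ := fun i => if h : i < n + 1 then d ⟨i, h⟩ else 0
  have hC : Antitone C := by
    intro i j hij
    by_cases hj : j < n + 1
    · have hi : i < n + 1 := by omega
      simp only [C, hi, hj, dif_pos]
      exact hc (by simpa [Fin.le_def] using hij)
    · by_cases hi : i < n + 1
      · simp only [C, hi, hj, dif_pos, dif_neg, not_false_eq_true, hc0]
      · simp only [C, hi, hj, dif_neg, not_false_eq_true, le_refl]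
  have hD : ∀ k, 1 ≤ k → k ≤ n + 1 → 0 ≤ ∑ i ∈ Finset.range k, D i := by
    intro k h1 hk
    rw [Finset.sum_range]
    convert hd k hk h1 using 2 with i
    have : (i : ℕ) < n + 1 := by omega
    simp only [D, this, dif_pos]
    rfl
  have := aux_abel C D hC (n + 1) hD n (by omega)
  have h2 : 0 ≤ C n * ∑ i ∈ Finset.range (n + 1), D i :=
    mul_nonneg (by simp [C, hc0]) (hD _ (by omega) le_rfl)
  have h3 : ∑ i ∈ Finset.range (n + 1), C i * D i = ∑ i, c i * d i := by
    rw [Finset.sum_range]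
    apply Finset.sum_congr rfl
    intro i _
    simp only [C, D, i.2, dif_pos]
  linarith

lemma aux_exists_antitone {n : ℕ} (c : Fin n → ℝ) :
    ∃ σ : Equiv.Perm (Fin n), Antitone (c ∘ σ) := by
  refine ⟨Tuple.sort (fun i => - c i), ?_⟩
  intro i j hij
  have := Tuple.monotone_sort (fun i => - c i) hij
  simpa using this

/-- If `u, v ≥ 0`, `α ≥ 0` and `Top_k(u) ≤ α·Top_k(v)` for every `k ∈ {1,…,n}`, then
`ψ(u) ≤ α·ψ(v)` for every symmetric monotone norm `ψ : ℝ^n → ℝ`. -/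
theorem majorization_symmetric_monotone_norm {n : ℕ}
    (u v : Fin n → ℝ) (hu : ∀ j, 0 ≤ u j) (hv : ∀ j, 0 ≤ v j)
    (α : ℝ) (hα : 0 ≤ α)
    (ψ : (Fin n → ℝ) → ℝ)
    (hψ_zero : ∀ w, ψ w = 0 ↔ w = 0)
    (hψ_tri : ∀ w₁ w₂, ψ (w₁ + w₂) ≤ ψ w₁ + ψ w₂)
    (hψ_hom : ∀ (θ : ℝ) w, ψ (θ • w) = |θ| * ψ w)
    (hψ_mono : ∀ w₁ w₂, (∀ j, 0 ≤ w₁ j) → (∀ j, w₁ j ≤ w₂ j) → ψ w₁ ≤ ψ w₂)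
    (hψ_sym : ∀ w (π : Equiv.Perm (Fin n)), ψ (w ∘ π) = ψ w)
    (htop : ∀ k, 1 ≤ k → k ≤ n → topk k u ≤ α * topk k v) :
    ψ u ≤ α * ψ v := by
  classical
  let s : Set (Fin n → ℝ) := convexHull ℝ (Set.range fun π : Equiv.Perm (Fin n) => α • (v ∘ π))
  have hs : ∀ y ∈ s, ψ y ≤ α * ψ v := by
    have hsub : s ⊆ {y | ψ y ≤ α * ψ v} := by
      apply convexHull_min
      · rintro _ ⟨π, rfl⟩
        simp only [Set.mem_ofPred_eq]
        rw [hψ_hom, hψ_sym, abs_of_nonneg hα]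
      · intro x hx y hy a b ha hb hab
        simp only [Set.mem_ofPred_eq] at *
        have h := hψ_tri (a • x) (b • y)
        rw [hψ_hom, hψ_hom, abs_of_nonneg ha, abs_of_nonneg hb] at h
        have h1 := mul_le_mul_of_nonneg_left hx ha
        have h2 := mul_le_mul_of_nonneg_left hy hb
        have h3 : a * (α * ψ v) + b * (α * ψ v) = α * ψ v := by rw [← add_mul, hab, one_mul]
        linarith
    exact hsub
  by_cases hdis : Disjoint s (Set.Ici u)
  swap
  · obtain ⟨y, hy, huy⟩ := Set.not_disjoint_iff.1 hdis
    exact (hψ_mono u y hu huy).trans (hs y hy)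
  exfalso
  obtain ⟨f, a, b, hfa, hab, hfb⟩ := geometric_hahn_banach_compact_closed (convex_convexHull ℝ _)
    ((Set.finite_range _).isCompact_convexHull (𝕜 := ℝ)) (convex_Ici u) isClosed_Ici hdis
  let c : Fin n → ℝ := fun i => f (Pi.single i 1)
  have hf : ∀ x, f x = ∑ i, c i * x i := by
    intro x
    conv_lhs => rw [pi_eq_sum_univ' x]
    rw [map_sum]
    apply Finset.sum_congr rfl
    intro i _
    rw [map_smul, smul_eq_mul, mul_comm]
  have hc0 : ∀ i, 0 ≤ c i := by
    intro i
    by_contra! hneg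
    have hub := hfb u (Set.mem_Ici.2 le_rfl)
    let t : ℝ := (f u - b) / (- c i)
    have ht : 0 ≤ t := div_nonneg (by linarith) (by linarith)
    have h1 := hfb (u + t • Pi.single i 1) (by
      rw [Set.mem_Ici]
      apply le_add_of_nonneg_right
      exact smul_nonneg ht (Pi.single_nonneg.2 zero_le_one))
    rw [map_add, map_smul, smul_eq_mul] at h1
    have h2 : t * (- c i) = f u - b := div_mul_cancel₀ _ (by linarith)
    change b < f u + t * c i at h1
    linarith
  obtain ⟨σ, hσ⟩ := aux_exists_antitone c
  obtain ⟨τ, hτ⟩ := aux_exists_antitone v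
  have key := aux_abel_fin (c ∘ σ) (fun i => α * v (τ i) - u (σ i)) hσ (fun i => hc0 _) (by
    intro k hk h1
    rw [Finset.sum_sub_distrib, ← Finset.mul_sum, sub_nonneg]
    exact (aux_le_topk hk u hu σ).trans ((htop k h1 hk).trans
      (mul_le_mul_of_nonneg_left (aux_topk_le hk v hv τ hτ) hα)))
  have hfw := hfa (α • (v ∘ (σ.symm.trans τ))) (subset_convexHull ℝ _ ⟨_, rfl⟩)
  have hfu := hfb u (Set.mem_Ici.2 le_rfl)
  rw [hf, ← Equiv.sum_comp σ] at hfw hfu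
  simp only [mul_sub, Finset.sum_sub_distrib, Function.comp_apply] at key
  simp at hfw
  linarith
end

section
/- For every p ∈ ℝ^n with p ≥ 0 entrywise and every k ∈ {1,…,n}, the set function f : 2^{[n]} → ℝ defined by f(J) = Top_k(p⟨J⟩) is submodular, i.e., f(A) + f(B) ≥ f(A ∪ B) + f(A ∩ B) for all A, B ⊆ {1,…,n}. -/
/-- `p⟨J⟩`: the vector whose `j`-th entry is `p j` if `j ∈ J` and `0` otherwise. -/
def restrictVec {n : ℕ} (p : Fin n → ℝ) (J : Finset (Fin n)) : Fin n → ℝ :=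
  fun j => if j ∈ J then p j else 0

theorem topk_set_finite {n : ℕ} (k : ℕ) (u : Fin n → ℝ) :
    {t : ℝ | ∃ S : Finset (Fin n), S.card = k ∧ t = ∑ j ∈ S, |u j|}.Finite := by
  refine (Set.finite_range (fun S : Finset (Fin n) => ∑ j ∈ S, |u j|)).subset ?_
  rintro t ⟨S, _, rfl⟩
  exact ⟨S, rfl⟩

theorem sum_restrict {n : ℕ} (p : Fin n → ℝ) (hp : ∀ j, 0 ≤ p j) (S J : Finset (Fin n)) :
    ∑ j ∈ S, |restrictVec p J j| = ∑ j ∈ S ∩ J, p j := by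
  rw [← Finset.filter_mem_eq_inter, Finset.sum_filter]
  refine Finset.sum_congr rfl fun j _ => ?_
  unfold restrictVec
  split_ifs
  · exact abs_of_nonneg (hp j)
  · simp

theorem le_topk {n : ℕ} (p : Fin n → ℝ) (hp : ∀ j, 0 ≤ p j) (k : ℕ) (hkn : k ≤ n)
    (S J : Finset (Fin n)) (hS : S ⊆ J) (hc : S.card ≤ k) :
    ∑ j ∈ S, p j ≤ topk k (restrictVec p J) := by
  obtain ⟨T, hST, hT⟩ := Finset.exists_superset_card_eq hc (by simpa using hkn)
  have h1 : ∑ j ∈ S, p j ≤ ∑ j ∈ T, |restrictVec p J j| := by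
    rw [sum_restrict p hp]
    exact Finset.sum_le_sum_of_subset_of_nonneg (Finset.subset_inter hST hS)
      (fun i _ _ => hp i)
  exact h1.trans (le_csSup (topk_set_finite k _).bddAbove ⟨T, hT, rfl⟩)

theorem topk_attained {n : ℕ} (p : Fin n → ℝ) (hp : ∀ j, 0 ≤ p j) (k : ℕ) (hkn : k ≤ n)
    (J : Finset (Fin n)) :
    ∃ S ⊆ J, S.card ≤ k ∧ topk k (restrictVec p J) = ∑ j ∈ S, p j := by
  have hne : {t : ℝ | ∃ S : Finset (Fin n), S.card = k ∧
      t = ∑ j ∈ S, |restrictVec p J j|}.Nonempty := by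
    obtain ⟨T, _, hT⟩ := Finset.exists_superset_card_eq (s := (∅ : Finset (Fin n)))
      (n := k) (by simp) (by simpa using hkn)
    exact ⟨_, T, hT, rfl⟩
  obtain ⟨S, hS, h⟩ := hne.csSup_mem (topk_set_finite k _)
  refine ⟨S ∩ J, Finset.inter_subset_right,
    (Finset.card_le_card Finset.inter_subset_left).trans hS.le, ?_⟩
  rw [← sum_restrict p hp]
  exact h

theorem sum_split {n : ℕ} (g : Fin n → ℝ) (A B S T X F : Finset (Fin n))
    (hS : S ⊆ A ∪ B) (hF : F = (S \ T) ∩ (A ∩ B) ∪ (T \ S)) (hX : X ⊆ F) :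
    ∑ j ∈ S, g j + ∑ j ∈ T, g j =
      ∑ j ∈ (S ∩ (A \ B)) \ T ∪ S ∩ T ∪ X, g j
        + ∑ j ∈ (S ∩ (B \ A)) \ T ∪ S ∩ T ∪ (F \ X), g j := by
  have key : ∀ U : Finset (Fin n), ∑ j ∈ U, g j = ∑ j, if j ∈ U then g j else 0 := by
    intro U; simp
  rw [key S, key T, key (_ ∪ X), key (_ ∪ (F \ X)), ← Finset.sum_add_distrib,
    ← Finset.sum_add_distrib]
  refine Finset.sum_congr rfl fun j _ => ?_
  have h1 := @hS j
  have h2 := @hX j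
  subst hF
  simp only [Finset.mem_union, Finset.mem_inter, Finset.mem_sdiff] at h1 h2 ⊢
  by_cases a : j ∈ A <;> by_cases b : j ∈ B <;> by_cases s : j ∈ S <;>
    by_cases t : j ∈ T <;> by_cases x : j ∈ X <;> simp_all

theorem topk_restrict_submodular {n : ℕ} (p : Fin n → ℝ) (hp : ∀ j, 0 ≤ p j)
    (k : ℕ) (hk1 : 1 ≤ k) (hkn : k ≤ n) (A B : Finset (Fin n)) :
    topk k (restrictVec p (A ∪ B)) + topk k (restrictVec p (A ∩ B)) ≤
      topk k (restrictVec p A) + topk k (restrictVec p B) := by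
  obtain ⟨S, hS, hSk, hSe⟩ := topk_attained p hp k hkn (A ∪ B)
  obtain ⟨T, hT, hTk, hTe⟩ := topk_attained p hp k hkn (A ∩ B)
  rw [hSe, hTe]
  obtain ⟨F, hF⟩ : ∃ F, F = (S \ T) ∩ (A ∩ B) ∪ (T \ S) := ⟨_, rfl⟩
  have hP : ((S ∩ (A \ B)) \ T ∪ S ∩ T).card ≤ k :=
    (Finset.card_le_card (by grind)).trans hSk
  have hQ : ((S ∩ (B \ A)) \ T ∪ S ∩ T).card ≤ k :=
    (Finset.card_le_card (by grind)).trans hSk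
  obtain ⟨X, hX, hXc⟩ := Finset.exists_subset_card_eq
    (s := F) (n := min F.card (k - ((S ∩ (A \ B)) \ T ∪ S ∩ T).card)) (min_le_left _ _)
  have hc := sum_split (fun _ => 1) A B S T X F hS hF hX
  simp only [Finset.sum_const, nsmul_eq_mul, mul_one] at hc
  norm_cast at hc
  rw [sum_split p A B S T X F hS hF hX]
  have hd1 : Disjoint ((S ∩ (A \ B)) \ T ∪ S ∩ T) X := by
    rw [Finset.disjoint_left]; grind
  have e1 := Finset.card_union_of_disjoint hd1
  have e2 := Finset.card_union_le ((S ∩ (B \ A)) \ T ∪ S ∩ T) (F \ X)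
  have e3 := Finset.card_sdiff_add_card_eq_card hX
  refine add_le_add (le_topk p hp k hkn _ _ ?_ ?_) (le_topk p hp k hkn _ _ ?_ ?_)
  · grind
  · omega
  · grind
  · omega
end

section
/- Let ε ∈ (0, 1/2], n ≥ 1, and let POS ⊆ {1,…,n} be the (1+ε)-geometric index set with associated prev and next. Let o ∈ ℝ^n be non-increasing with o ≥ 0 entrywise and o_1 = 1, and let ρ : POS → ℝ_{≥0} be non-increasing (i.e., ρ_k ≥ ρ_{k'} for k ≤ k' in POS) with ρ_k ≤ o_k + 2ε/n for every k ∈ POS. Let ρ⃗ ∈ ℝ^n be the expansion of ρ. Then Top_k(ρ⃗) ≤ (1+3ε)·Top_k(o) for every k ∈ POS, Top_k(ρ⃗) ≤ (1+11ε)·Top_k(o) for every k ∈ {1,…,n}, and consequently ψ(ρ⃗) ≤ (1+11ε)·ψ(o) for every symmetric monotone norm ψ : ℝ^n → ℝ. -/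
/-- The iterative sequence generating the `(1+ε)`-geometric index set:
`t₀ = 1` and `t_{s+1} = min(n, ⌈(1+ε)·t_s⌉)`. -/
noncomputable def posSeq (n : ℕ) (ε : ℝ) : ℕ → ℕ
  | 0 => 1
  | s + 1 => min n ⌈(1 + ε) * (posSeq n ε s : ℝ)⌉₊

/-- The `(1+ε)`-geometric index set `POS ⊆ {1,…,n}`. -/
def geomPOS (n : ℕ) (ε : ℝ) : Set ℕ := Set.range (posSeq n ε)

/-- `prev(k)`: the largest element of `POS` smaller than `k` (and `prev 1 = 0`). -/
noncomputable def prevIdx (POS : Set ℕ) (k : ℕ) : ℕ := sSup {t | t ∈ POS ∧ t < k}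

/-- The `k`-th entry (1-indexed) of a vector `u ∈ ℝ^n`, for `k ∈ {1,…,n}`. -/
def ent {n : ℕ} (u : Fin n → ℝ) (k : ℕ) : ℝ :=
  if h : k - 1 < n then u ⟨k - 1, h⟩ else 0

/-- The expansion `ρ⃗ ∈ ℝ^n` of `ρ : POS → ℝ`: `ρ⃗_k = ρ_k` if `k ∈ POS`,
and `ρ⃗_k = ρ_{prev(k)}` otherwise (entries 1-indexed). -/
noncomputable def expandVec (n : ℕ) (POS : Set ℕ) (ρ : ℕ → ℝ) : Fin n → ℝ :=
  fun i =>
    haveI := Classical.dec ((i.val + 1) ∈ POS)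
    if (i.val + 1) ∈ POS then ρ (i.val + 1) else ρ (prevIdx POS (i.val + 1))

lemma abel_nonneg (a d : ℕ → ℝ) (ha : Antitone a) (ha0 : ∀ i, 0 ≤ a i) (k : ℕ)
    (hd : ∀ m ≤ k, 0 ≤ ∑ j ∈ Finset.range m, d j) :
    0 ≤ ∑ j ∈ Finset.range k, d j * a j := by
  have key : ∀ m, m + 1 ≤ k →
      a m * ∑ j ∈ Finset.range (m + 1), d j ≤ ∑ j ∈ Finset.range (m + 1), d j * a j := by
    intro m
    induction m with
    | zero => intro _; simp [mul_comm]
    | succ m ih =>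
      intro h
      have h1 := ih (by omega)
      have h2 := hd (m + 1) (by omega)
      have h3 := ha (Nat.le_succ m)
      rw [Finset.sum_range_succ _ (m + 1), Finset.sum_range_succ _ (m + 1)]
      have := mul_le_mul_of_nonneg_right h3 h2
      simp only [Nat.succ_eq_add_one] at this
      nlinarith
  rcases k with _ | k
  · simp
  · exact le_trans (mul_nonneg (ha0 k) (hd (k + 1) le_rfl)) (key k le_rfl)

/-- extension by zero -/
noncomputable def ext0 {n : ℕ} (u : Fin n → ℝ) (j : ℕ) : ℝ := if h : j < n then u ⟨j, h⟩ else 0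

lemma ext0_nonneg {n : ℕ} {u : Fin n → ℝ} (h : ∀ i, 0 ≤ u i) (j : ℕ) : 0 ≤ ext0 u j := by
  unfold ext0; split_ifs
  · exact h _
  · exact le_rfl

lemma ext0_anti {n : ℕ} {u : Fin n → ℝ} (hu : Antitone u) (h : ∀ i, 0 ≤ u i) :
    Antitone (ext0 u) := by
  intro i j hij
  unfold ext0
  split_ifs with h1 h2 h2
  · exact hu (by simpa using hij)
  · omega
  · exact h _
  · exact le_rfl

lemma ext0_val {n : ℕ} (u : Fin n → ℝ) (i : Fin n) : ext0 u i = u i := by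
  simp [ext0]

lemma sum_le_initSum {n : ℕ} {u : Fin n → ℝ} (hu : Antitone u) (h0 : ∀ i, 0 ≤ u i)
    (S : Finset (Fin n)) :
    ∑ j ∈ S, |u j| ≤ ∑ j ∈ Finset.range S.card, ext0 u j := by
  classical
  set T : Finset ℕ := S.map Fin.valEmbedding with hT
  have hTn : T ⊆ Finset.range n := by
    intro x hx
    simp only [hT, Finset.mem_map, Fin.valEmbedding_apply] at hx
    obtain ⟨i, _, rfl⟩ := hx
    simp
  have hc : T.card = S.card := by simp [hT]
  have hle : S.card ≤ n := by simpa using S.card_le_univ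
  have e1 : ∑ j ∈ S, |u j| = ∑ j ∈ T, ext0 u j := by
    simp only [hT, Finset.sum_map, Fin.valEmbedding_apply, ext0_val]
    exact Finset.sum_congr rfl fun i _ => abs_of_nonneg (h0 i)
  have e2 : ∑ j ∈ T, ext0 u j = ∑ j ∈ Finset.range n, (if j ∈ T then (1:ℝ) else 0) * ext0 u j := by
    simp only [ite_mul, one_mul, zero_mul]
    rw [← Finset.sum_filter]
    congr 1
    ext x; simp only [Finset.mem_filter]
    exact ⟨fun h => ⟨hTn h, h⟩, fun h => h.2⟩
  have e3 : ∑ j ∈ Finset.range S.card, ext0 u j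
      = ∑ j ∈ Finset.range n, (if j < S.card then (1:ℝ) else 0) * ext0 u j := by
    simp only [ite_mul, one_mul, zero_mul]
    rw [← Finset.sum_filter]
    congr 1
    ext x; simp only [Finset.mem_filter, Finset.mem_range]
    omega
  have := abel_nonneg (ext0 u)
    (fun j => (if j < S.card then (1:ℝ) else 0) - (if j ∈ T then (1:ℝ) else 0))
    (ext0_anti hu h0) (ext0_nonneg h0) n (by
      intro m _
      rw [Finset.sum_sub_distrib, sub_nonneg, Finset.sum_boole, Finset.sum_boole]
      norm_cast
      have a1 : ((Finset.range m).filter (· ∈ T)).card ≤ m := by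
        simpa using Finset.card_filter_le (Finset.range m) (· ∈ T)
      have a2 : ((Finset.range m).filter (· ∈ T)).card ≤ S.card := by
        rw [← hc]
        exact Finset.card_le_card fun x hx => (Finset.mem_filter.1 hx).2
      have a3 : (Finset.range m).filter (· < S.card) = Finset.range (min m S.card) := by
        ext x; simp
      rw [a3, Finset.card_range]
      exact le_min a1 a2)
  simp only [sub_mul, Finset.sum_sub_distrib] at this
  rw [e1, e2, e3]
  linarith

lemma initSum_le_topk {n : ℕ} (u : Fin n → ℝ) (h0 : ∀ i, 0 ≤ u i) (k : ℕ) (hk : k ≤ n) :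
    ∑ j ∈ Finset.range k, ext0 u j ≤ topk k u := by
  unfold topk
  apply le_csSup
  · refine ⟨∑ j, |u j|, ?_⟩
    rintro t ⟨S, _, rfl⟩
    exact Finset.sum_le_univ_sum_of_nonneg fun i => abs_nonneg _
  · refine ⟨Finset.univ.map (Fin.castLEEmb hk), by simp, ?_⟩
    rw [Finset.sum_map, Finset.sum_range]
    refine Finset.sum_congr rfl fun i _ => ?_
    rw [abs_of_nonneg (h0 _), ← ext0_val u]
    simp

lemma topk_le_initSum {n : ℕ} {u : Fin n → ℝ} (hu : Antitone u) (h0 : ∀ i, 0 ≤ u i) (k : ℕ) :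
    topk k u ≤ ∑ j ∈ Finset.range k, ext0 u j := by
  unfold topk
  apply Real.sSup_le
  · rintro t ⟨S, rfl, rfl⟩
    exact sum_le_initSum hu h0 S
  · exact Finset.sum_nonneg fun j _ => ext0_nonneg h0 j

lemma count_sum (a : ℕ → ℝ) (ha : Antitone a) (ha0 : ∀ i, 0 ≤ a i) (k : ℕ) (c : ℝ)
    (q : ℕ → ℕ) (hq : ∀ i < k, q i < k)
    (hcount : ∀ m ≤ k, (((Finset.range k).filter (fun i => q i < m)).card : ℝ) ≤ c * m) :
    ∑ i ∈ Finset.range k, a (q i) ≤ c * ∑ j ∈ Finset.range k, a j := by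
  classical
  have e : ∑ i ∈ Finset.range k, a (q i) = ∑ j ∈ Finset.range k,
      (((Finset.range k).filter (fun i => q i = j)).card : ℝ) * a j := by
    rw [← Finset.sum_fiberwise_of_maps_to (s := Finset.range k) (t := Finset.range k) (g := q)
      (by simpa using hq)]
    refine Finset.sum_congr rfl fun j _ => ?_
    rw [Finset.sum_congr rfl (g := fun _ => a j)]
    · simp
    · intro x hx; rw [(Finset.mem_filter.1 hx).2]
  have := abel_nonneg a (fun j => c - (((Finset.range k).filter (fun i => q i = j)).card : ℝ))
    ha ha0 k (by
      intro m hm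
      rw [Finset.sum_sub_distrib, sub_nonneg]
      have h := hcount m hm
      rw [Finset.card_eq_sum_card_fiberwise (f := q) (t := Finset.range m)] at h
      · push_cast at h
        simp only [Finset.sum_const, Finset.card_range, nsmul_eq_mul]
        rw [mul_comm (m : ℝ) c]
        refine le_trans (le_of_eq ?_) h
        refine Finset.sum_congr rfl fun j hj => ?_
        congr 2
        ext x
        simp only [Finset.mem_filter, Finset.mem_range] at hj ⊢
        constructor
        · rintro ⟨h1, rfl⟩; exact ⟨⟨h1, hj⟩, rfl⟩
        · rintro ⟨⟨h1, _⟩, h2⟩; exact ⟨h1, h2⟩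
      · intro x hx
        have := (Finset.mem_filter.1 (Finset.mem_coe.1 hx)).2
        simpa using this)
  simp only [sub_mul, Finset.sum_sub_distrib] at this
  rw [e, Finset.mul_sum]
  linarith

lemma posSeq_pos {n : ℕ} (hn : 1 ≤ n) {ε : ℝ} (hε : 0 < ε) (s : ℕ) :
    1 ≤ posSeq n ε s ∧ posSeq n ε s ≤ n := by
  induction s with
  | zero => simp [posSeq, hn]
  | succ s ih =>
    refine ⟨?_, by simp [posSeq]⟩
    simp only [posSeq, le_min_iff]
    refine ⟨hn, Nat.one_le_iff_ne_zero.2 ?_⟩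
    have : (1:ℝ) ≤ posSeq n ε s := by exact_mod_cast ih.1
    have : 0 < (1 + ε) * (posSeq n ε s : ℝ) := by positivity
    exact ne_of_gt (Nat.ceil_pos.2 this)

/-- largest element of POS at most `k` -/
noncomputable def floorIdx (POS : Set ℕ) (k : ℕ) : ℕ :=
  haveI := Classical.dec (k ∈ POS)
  if k ∈ POS then k else prevIdx POS k

lemma expandVec_eq (n : ℕ) (POS : Set ℕ) (ρ : ℕ → ℝ) (i : Fin n) :
    expandVec n POS ρ i = ρ (floorIdx POS (i.val + 1)) := by
  unfold expandVec floorIdx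
  split_ifs <;> rfl

lemma floorIdx_spec {POS : Set ℕ} (h1 : 1 ∈ POS) (k : ℕ) (hk : 1 ≤ k) :
    floorIdx POS k ∈ POS ∧ floorIdx POS k ≤ k ∧ ∀ t ∈ POS, t ≤ k → t ≤ floorIdx POS k := by
  unfold floorIdx
  split_ifs with h
  · exact ⟨h, le_rfl, fun t _ ht => ht⟩
  · have hb : BddAbove {t | t ∈ POS ∧ t < k} := ⟨k, fun t ht => ht.2.le⟩
    have hk1 : 1 < k := lt_of_le_of_ne hk (by rintro rfl; exact h h1)
    have hm := Nat.sSup_mem (s := {t | t ∈ POS ∧ t < k}) ⟨1, h1, hk1⟩ hb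
    refine ⟨hm.1, hm.2.le, fun t ht htk => le_csSup hb ⟨ht, lt_of_le_of_ne htk ?_⟩⟩
    rintro rfl; exact h ht

lemma floorIdx_bound {n : ℕ} (hn : 1 ≤ n) {ε : ℝ} (hε : 0 < ε) (k : ℕ) (hk : 1 ≤ k) (hkn : k ≤ n) :
    (k : ℝ) ≤ (1 + ε) * floorIdx (geomPOS n ε) k := by
  obtain ⟨⟨s, hs⟩, h2, h3⟩ := floorIdx_spec (POS := geomPOS n ε) ⟨0, rfl⟩ k hk
  have hp := posSeq_pos hn hε s
  rw [← hs] at h2 h3 ⊢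
  have hpr : (1:ℝ) ≤ posSeq n ε s := by exact_mod_cast hp.1
  have hlt : (posSeq n ε s : ℝ) < (1 + ε) * posSeq n ε s := by nlinarith
  by_cases hc : posSeq n ε (s + 1) ≤ k
  · have h4 := h3 _ ⟨s + 1, rfl⟩ hc
    have h5 : posSeq n ε s < ⌈(1 + ε) * (posSeq n ε s : ℝ)⌉₊ := Nat.lt_ceil.2 hlt
    have h6 : n ≤ posSeq n ε s := by
      rw [posSeq] at h4
      omega
    have : (k:ℝ) ≤ posSeq n ε s := by exact_mod_cast hkn.trans h6
    linarith
  · have h5 : k < ⌈(1 + ε) * (posSeq n ε s : ℝ)⌉₊ := by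
      rw [posSeq] at hc
      omega
    exact (Nat.lt_ceil.1 h5).le

/-- domination of symmetric monotone norms from initSum sums -/
lemma norm_dom {n : ℕ} (u v : Fin n → ℝ) (hu : Antitone u) (hu0 : ∀ i, 0 ≤ u i)
    (hv0 : ∀ i, 0 ≤ v i) (c : ℝ) (hc : 0 ≤ c)
    (hpre : ∀ k ≤ n, ∑ j ∈ Finset.range k, ext0 u j ≤ c * ∑ j ∈ Finset.range k, ext0 v j)
    (ψ : (Fin n → ℝ) → ℝ)
    (h0 : ∀ w, ψ w = 0 ↔ w = 0)
    (hadd : ∀ w₁ w₂, ψ (w₁ + w₂) ≤ ψ w₁ + ψ w₂)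
    (hsm : ∀ (θ : ℝ) w, ψ (θ • w) = |θ| * ψ w)
    (hmono : ∀ w₁ w₂, (∀ i, 0 ≤ w₁ i) → (∀ i, w₁ i ≤ w₂ i) → ψ w₁ ≤ ψ w₂)
    (hsymm : ∀ w (π : Equiv.Perm (Fin n)), ψ (w ∘ π) = ψ w) :
    ψ u ≤ c * ψ v := by
  classical
  have hnn : ∀ w, 0 ≤ ψ w := by
    intro w
    have h1 := hadd w ((-1 : ℝ) • w)
    rw [hsm] at h1
    have : w + (-1 : ℝ) • w = 0 := by simp
    rw [this, (h0 0).2 rfl] at h1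
    norm_num at h1
    linarith
  by_cases hu' : u = 0
  · rw [(h0 u).2 hu']; exact mul_nonneg hc (hnn v)
  obtain ⟨f, hf1, hf2⟩ : ∃ f : (Fin n → ℝ) →ₗ[ℝ] ℝ, f u = ψ u ∧ ∀ x, f x ≤ ψ x := by
    obtain ⟨f, hf1, hf2⟩ := exists_extension_of_le_sublinear
      (LinearPMap.mkSpanSingleton u (ψ u) hu') ψ
      (fun c hc x => by rw [hsm, abs_of_pos hc]) hadd (by
        rintro ⟨x, hx⟩
        obtain ⟨t, rfl⟩ := Submodule.mem_span_singleton.1 hx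
        rw [LinearPMap.mkSpanSingleton'_apply]
        simp only [hsm, smul_eq_mul, RingHom.id_apply]
        exact mul_le_mul_of_nonneg_right (le_abs_self t) (hnn u))
    refine ⟨f, ?_, hf2⟩
    have hmem : u ∈ Submodule.span ℝ {u} :=
      Submodule.mem_span_singleton_self (R := ℝ) u
    exact (hf1 ⟨u, hmem⟩).trans (LinearPMap.mkSpanSingleton'_apply_self u (ψ u) _ hmem)
  set w : Fin n → ℝ := fun i => f (Pi.single i 1) with hw
  have hfw : ∀ x, f x = ∑ i, w i * x i := by
    intro x
    rw [LinearMap.pi_apply_eq_sum_univ f x]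
    refine Finset.sum_congr rfl fun i _ => ?_
    rw [smul_eq_mul, mul_comm, hw]
    congr 2
    ext j; simp [Pi.single_apply, eq_comm]
  set wp : Fin n → ℝ := fun i => max (w i) 0 with hwp
  set σ : Equiv.Perm (Fin n) := Tuple.sort (fun i => - wp i) with hσ
  have hanti : Antitone (wp ∘ σ) := by
    intro i j hij
    have := Tuple.monotone_sort (fun i => - wp i) hij
    simp only [Function.comp] at this ⊢
    linarith
  have hwp0 : ∀ i, 0 ≤ wp i := fun i => le_max_right _ _
  have s1 : ψ u ≤ ∑ i, wp i * u i := by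
    rw [← hf1, hfw]
    exact Finset.sum_le_sum fun i _ => mul_le_mul_of_nonneg_right (le_max_left _ _) (hu0 i)
  have s2 : ∑ i, wp i * u i ≤ ∑ i, (wp ∘ σ) i * u i := by
    have hmv : Monovary (wp ∘ σ) u := hanti.monovary hu
    have := hmv.sum_comp_perm_mul_le_sum_mul (σ := σ⁻¹)
    simpa using this
  have s3 : ∑ i, (wp ∘ σ) i * u i ≤ c * ∑ i, (wp ∘ σ) i * v i := by
    have := abel_nonneg (ext0 (wp ∘ σ)) (fun j => c * ext0 v j - ext0 u j)
      (ext0_anti hanti fun i => hwp0 _) (ext0_nonneg fun i => hwp0 _) n (by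
        intro m hm
        rw [Finset.sum_sub_distrib, sub_nonneg, ← Finset.mul_sum]
        exact hpre m hm)
    rw [Finset.sum_range] at this
    simp only [ext0_val] at this
    rw [Finset.mul_sum, ← sub_nonneg, ← Finset.sum_sub_distrib]
    refine this.trans (le_of_eq (Finset.sum_congr rfl fun i _ => by ring))
  have s4 : ∑ i, (wp ∘ σ) i * v i = ∑ i, wp i * v (σ⁻¹ i) := by
    rw [← Equiv.sum_comp σ (fun i => wp i * v (σ⁻¹ i))]
    simp
  have s5 : ∑ i, wp i * v (σ⁻¹ i) ≤ ψ v := by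
    set z : Fin n → ℝ := fun i => if 0 ≤ w i then v (σ⁻¹ i) else 0 with hz
    have e : ∑ i, wp i * v (σ⁻¹ i) = f z := by
      rw [hfw]
      refine Finset.sum_congr rfl fun i _ => ?_
      simp only [hwp, hz]
      split_ifs with h
      · rw [max_eq_left h]
      · rw [max_eq_right (le_of_not_ge h)]; simp
    rw [e, ← hsymm v σ⁻¹]
    refine (hf2 z).trans (hmono _ _ ?_ ?_)
    · intro i; simp only [hz]; split_ifs
      · exact hv0 _
      · exact le_rfl
    · intro i; simp only [hz, Function.comp]; split_ifs
      · exact le_rfl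
      · exact hv0 _
  calc ψ u ≤ c * ∑ i, (wp ∘ σ) i * v i := s1.trans (s2.trans s3)
    _ ≤ c * ψ v := mul_le_mul_of_nonneg_left (s4 ▸ s5) hc

/-- Lemma 2.7 of Ibrahimpur–Swamy (as used for the PTAS): if `ε ∈ (0,1/2]`, `o ∈ ℝ^n` is
non-increasing, nonnegative, with `o_1 = 1`, and `ρ : POS → ℝ_{≥0}` is non-increasing
with `ρ_k ≤ o_k + 2ε/n` on `POS`, then the expansion `ρ⃗` satisfies
`Top_k(ρ⃗) ≤ (1+3ε)·Top_k(o)` for `k ∈ POS`, `Top_k(ρ⃗) ≤ (1+11ε)·Top_k(o)` for all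
`k ∈ {1,…,n}`, and hence `ψ(ρ⃗) ≤ (1+11ε)·ψ(o)` for every symmetric monotone norm. -/
theorem expansion_norm_bound {n : ℕ} (hn : 1 ≤ n)
    (ε : ℝ) (hε : 0 < ε) (hε2 : ε ≤ 1 / 2)
    (o : Fin n → ℝ) (ho_mono : Antitone o) (ho_nn : ∀ i, 0 ≤ o i) (ho1 : ent o 1 = 1)
    (ρ : ℕ → ℝ)
    (hρ_nn : ∀ k ∈ geomPOS n ε, 0 ≤ ρ k)
    (hρ_mono : ∀ k ∈ geomPOS n ε, ∀ k' ∈ geomPOS n ε, k ≤ k' → ρ k' ≤ ρ k)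
    (hρ_le : ∀ k ∈ geomPOS n ε, ρ k ≤ ent o k + 2 * ε / n) :
    (∀ k ∈ geomPOS n ε,
        topk k (expandVec n (geomPOS n ε) ρ) ≤ (1 + 3 * ε) * topk k o) ∧
    (∀ k, 1 ≤ k → k ≤ n →
        topk k (expandVec n (geomPOS n ε) ρ) ≤ (1 + 11 * ε) * topk k o) ∧
    (∀ ψ : (Fin n → ℝ) → ℝ,
        (∀ w, ψ w = 0 ↔ w = 0) →
        (∀ w₁ w₂, ψ (w₁ + w₂) ≤ ψ w₁ + ψ w₂) →
        (∀ (θ : ℝ) w, ψ (θ • w) = |θ| * ψ w) →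
        (∀ w₁ w₂, (∀ i, 0 ≤ w₁ i) → (∀ i, w₁ i ≤ w₂ i) → ψ w₁ ≤ ψ w₂) →
        (∀ w (π : Equiv.Perm (Fin n)), ψ (w ∘ π) = ψ w) →
        ψ (expandVec n (geomPOS n ε) ρ) ≤ (1 + 11 * ε) * ψ o) := by
  set POS := geomPOS n ε with hPOS
  set u := expandVec n POS ρ with hu
  have h1 : 1 ∈ POS := ⟨0, rfl⟩
  have hu_eq : ∀ i : Fin n, u i = ρ (floorIdx POS (i.val + 1)) := expandVec_eq n POS ρ
  have spec := fun i : ℕ => floorIdx_spec h1 (i + 1) (by omega)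
  have hu0 : ∀ i, 0 ≤ u i := fun i => by rw [hu_eq]; exact hρ_nn _ (spec i).1
  have huA : Antitone u := by
    intro i j hij
    rw [hu_eq, hu_eq]
    refine hρ_mono _ (spec i).1 _ (spec j).1 ((spec j).2.2 _ (spec i).1 ?_)
    have := (spec i).2.1
    have h' : i.val ≤ j.val := hij
    omega
  have hpos1 : ∀ t ∈ POS, 1 ≤ t ∧ t ≤ n := by
    rintro t ⟨s, rfl⟩; exact posSeq_pos hn hε s
  have hent : ∀ t, ent o t = ext0 o (t - 1) := fun t => rfl
  have hn0 : (0:ℝ) < n := by exact_mod_cast hn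
  have hpre : ∀ k ≤ n, ∑ j ∈ Finset.range k, ext0 u j
      ≤ (1 + 3 * ε) * ∑ j ∈ Finset.range k, ext0 o j := by
    intro k hk
    rcases Nat.eq_zero_or_pos k with rfl | hk0
    · simp
    have hA := ext0_anti ho_mono ho_nn
    have hN := ext0_nonneg ho_nn
    have a1 : ∑ j ∈ Finset.range k, ext0 u j
        ≤ ∑ j ∈ Finset.range k, (ext0 o (floorIdx POS (j + 1) - 1) + 2 * ε / n) := by
      refine Finset.sum_le_sum fun j hj => ?_
      have hjn : j < n := lt_of_lt_of_le (Finset.mem_range.1 hj) hk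
      have := hρ_le _ (spec j).1
      rw [hent] at this
      unfold ext0 at this ⊢
      rw [dif_pos hjn, hu_eq]
      exact this
    have a2 := count_sum (ext0 o) hA hN k (1 + ε) (fun j => floorIdx POS (j + 1) - 1)
      (by
        intro i hi
        have := (spec i).2.1
        show floorIdx POS (i + 1) - 1 < k
        omega)
      (by
        intro m _
        have hm0 : 0 ≤ (1 + ε) * (m : ℝ) := by positivity
        refine le_trans ?_ (Nat.floor_le hm0)
        norm_cast
        have hsub : (Finset.range k).filter (fun i => floorIdx POS (i + 1) - 1 < m)
            ⊆ Finset.range ⌊(1 + ε) * (m : ℝ)⌋₊ := by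
          intro i hi
          simp only [Finset.mem_filter, Finset.mem_range] at hi ⊢
          have b1 := floorIdx_bound hn hε (i + 1) (by omega) (by omega)
          have b2 : floorIdx POS (i + 1) ≤ m := by
            have := (hpos1 _ (spec i).1).1
            omega
          have b3 : (floorIdx POS (i + 1) : ℝ) ≤ m := by exact_mod_cast b2
          have b4 : ((i + 1 : ℕ) : ℝ) ≤ (1 + ε) * m :=
            b1.trans (mul_le_mul_of_nonneg_left b3 (by linarith))
          exact Nat.le_floor b4
        simpa using Finset.card_le_card hsub)
    have a3 : (1:ℝ) ≤ ∑ j ∈ Finset.range k, ext0 o j := by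
      have : ext0 o 0 = 1 := ho1
      rw [← this]
      exact Finset.single_le_sum (f := ext0 o) (fun j _ => hN j) (Finset.mem_range.2 hk0)
    have a4 : (k : ℝ) * (2 * ε / n) ≤ 2 * ε := by
      have : (k:ℝ) ≤ n := by exact_mod_cast hk
      calc (k : ℝ) * (2 * ε / n) ≤ n * (2 * ε / n) := by gcongr
        _ = 2 * ε := by field_simp
    rw [Finset.sum_add_distrib, Finset.sum_const, Finset.card_range, nsmul_eq_mul] at a1
    nlinarith
  have htop : ∀ k ≤ n, topk k u ≤ (1 + 3 * ε) * topk k o := by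
    intro k hk
    refine (topk_le_initSum huA hu0 k).trans ((hpre k hk).trans ?_)
    exact mul_le_mul_of_nonneg_left (initSum_le_topk o ho_nn k hk) (by linarith)
  refine ⟨fun k hk => htop k (hpos1 k hk).2, fun k _ hk => ?_, ?_⟩
  · have h2 : 0 ≤ topk k o := le_trans
      (Finset.sum_nonneg fun j _ => ext0_nonneg ho_nn j) (initSum_le_topk o ho_nn k hk)
    have := htop k hk
    nlinarith
  · intro ψ p1 p2 p3 p4 p5
    refine norm_dom u o huA hu0 ho_nn (1 + 11 * ε) (by linarith) (fun k hk => ?_) ψ p1 p2 p3 p4 p5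
    have h2 : 0 ≤ ∑ j ∈ Finset.range k, ext0 o j :=
      Finset.sum_nonneg fun j _ => ext0_nonneg ho_nn j
    have := hpre k hk
    nlinarith
end

section
/- Let S be a nonempty finite set, z : S → ℝ_{≥0}, and x : S → [0,1] with Σ_{j∈S} x_j > 0, and let t = ⌈ Σ_{j∈S} x_j ⌉. Then t ≤ |S|, and the sum of the t largest values among { z_j : j ∈ S } is at least Σ_{j∈S} z_j·x_j; equivalently, there exists T ⊆ S with |T| = t and Σ_{j∈T} z_j ≥ Σ_{j∈S} z_j·x_j. -/
theorem exists_top_subset {ι : Type*} [DecidableEq ι] (S : Finset ι) (z : ι → ℝ) (n : ℕ)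
    (hn : n ≤ S.card) :
    ∃ T ⊆ S, T.card = n ∧ ∀ a ∈ T, ∀ b ∈ S, b ∉ T → z b ≤ z a := by
  induction n with
  | zero => exact ⟨∅, by simp, by simp, by simp⟩
  | succ n ih =>
    obtain ⟨T, hTS, hc, hT⟩ := ih (by omega)
    have hne : (S \ T).Nonempty := by
      rw [← Finset.card_pos, Finset.card_sdiff_of_subset hTS]
      omega
    obtain ⟨m, hm, hmax⟩ := Finset.exists_max_image (S \ T) z hne
    rw [Finset.mem_sdiff] at hm
    refine ⟨insert m T, Finset.insert_subset hm.1 hTS, ?_, ?_⟩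
    · rw [Finset.card_insert_of_notMem hm.2, hc]
    · intro a ha b hb hbT
      rw [Finset.mem_insert, not_or] at hbT
      rcases Finset.mem_insert.1 ha with rfl | ha
      · exact hmax b (Finset.mem_sdiff.2 ⟨hb, hbT.2⟩)
      · exact hT a ha b hb hbT.2

/-- Let `S` be a nonempty finite set, `z : S → ℝ_{≥0}`, `x : S → [0,1]` with
`Σ_{j∈S} x_j > 0`, and `t = ⌈Σ_{j∈S} x_j⌉`. Then `t ≤ |S|`, and there exists `T ⊆ S`
with `|T| = t` and `Σ_{j∈T} z_j ≥ Σ_{j∈S} z_j·x_j` (equivalently, the sum of the `t`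
largest values among `{z_j : j ∈ S}` is at least `Σ_{j∈S} z_j·x_j`). -/
theorem ceil_largest_values_cover {ι : Type*} [DecidableEq ι]
    (S : Finset ι) (hS : S.Nonempty)
    (z x : ι → ℝ) (hz : ∀ j ∈ S, 0 ≤ z j)
    (hx : ∀ j ∈ S, x j ∈ Set.Icc (0 : ℝ) 1)
    (hsum : 0 < ∑ j ∈ S, x j) :
    ⌈∑ j ∈ S, x j⌉₊ ≤ S.card ∧
    ∃ T ⊆ S, T.card = ⌈∑ j ∈ S, x j⌉₊ ∧
      ∑ j ∈ T, z j ≥ ∑ j ∈ S, z j * x j := by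
  have hle : ⌈∑ j ∈ S, x j⌉₊ ≤ S.card := by
    rw [Nat.ceil_le]
    calc ∑ j ∈ S, x j ≤ ∑ j ∈ S, (1 : ℝ) := Finset.sum_le_sum fun j hj => (hx j hj).2
      _ = S.card := by simp
  refine ⟨hle, ?_⟩
  obtain ⟨T, hTS, hc, hT⟩ := exists_top_subset S z _ hle
  refine ⟨T, hTS, hc, ?_⟩
  have hne : T.Nonempty := by
    rw [← Finset.card_pos, hc]
    exact Nat.ceil_pos.2 hsum
  obtain ⟨m, hm, hmin⟩ := Finset.exists_min_image T z hne
  have hceil : ∑ j ∈ S, x j ≤ (T.card : ℝ) := by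
    rw [hc]
    exact Nat.le_ceil _
  have key : ∑ j ∈ S, z m * ((if j ∈ T then (1 : ℝ) else 0) - x j)
      ≤ ∑ j ∈ S, ((if j ∈ T then z j else 0) - z j * x j) := by
    refine Finset.sum_le_sum fun j hj => ?_
    obtain ⟨h0, h1⟩ := hx j hj
    split_ifs with hjT
    · nlinarith [hmin j hjT]
    · nlinarith [hT m hm j hj hjT]
  rw [← Finset.mul_sum, Finset.sum_sub_distrib, Finset.sum_sub_distrib, Finset.sum_ite_mem,
    Finset.sum_ite_mem, Finset.inter_eq_right.2 hTS] at key
  have h1 : ∑ j ∈ T, (1 : ℝ) = T.card := by simp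
  rw [h1] at key
  have := mul_nonneg (hz m (hTS hm)) (sub_nonneg.2 hceil)
  linarith
end
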